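/- arXiv:1301.6219 — 3 statements merged into one kernel-verified Lean document; each statement's English description precedes it below -/
import Mathlib

section
/- (Branch invariance of V₀.) Let V(z₁,…,zₙ) = ∑_{(l,m)∈I} ε_{lm} Li₂(z_l/z_m) be a potential function and let (z₁,…,zₙ) be a solution of H, so that D_k := z_k ∂V/∂z_k ∈ 2πi ℤ for every k. Choose, for each (l,m) ∈ I, an integer a_{lm}, and for each k, an integer b_k, and set: Li₂*(z_l/z_m) := Li₂(z_l/z_m) + 2 a_{lm} π i (log z_l − log z_m), log* z_k := log z_k + 2πi b_k, and D_k* := D_k + 2πi (∑_{m:(k,m)∈I} ε_{km} a_{km} − ∑_{l:(l,k)∈I} ε_{lk} a_{lk}) (the value of z_k times the partial derivative in z_k of the star-modified potential). Then ∑_{(l,m)∈I} ε_{lm} Li₂*(z_l/z_m) − ∑_{k=1}^n D_k* · log* z_k ≡ V(z₁,…,zₙ) − ∑_{k=1}^n D_k log z_k (mod 4π²). In other words, the value of V₀ at a solution of H is invariant under a choice of branch of the logarithm, modulo 4π². -/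
/-- The dilogarithm `Li₂(u) = −∫₀^u log(1−t)/t dt`, integrated along the
straight segment from `0` to `u` (parametrized by `t = u·s`, `s ∈ [0,1]`). -/
noncomputable def Li2 (u : ℂ) : ℂ := -∫ s in (0:ℝ)..(1:ℝ), Complex.log (1 - u * s) / s

/-- The value of `z_k · ∂V/∂z_k` for the potential function
`V(z₁,…,zₙ) = ∑_{(l,m)∈I} ε_{lm} Li₂(z_l/z_m)`, namely
`∑_{m:(k,m)∈I} (−ε_{km}) log(1 − z_k/z_m) + ∑_{l:(l,k)∈I} ε_{lk} log(1 − z_l/z_k)`. -/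
noncomputable def zdV (n : ℕ) (I : Finset (Fin n × Fin n)) (ε : Fin n × Fin n → ℤ)
    (z : Fin n → ℂ) (k : Fin n) : ℂ :=
  (∑ p ∈ I.filter (fun p => p.1 = k), (-(ε p : ℂ)) * Complex.log (1 - z p.1 / z p.2)) +
  ∑ p ∈ I.filter (fun p => p.2 = k), (ε p : ℂ) * Complex.log (1 - z p.1 / z p.2)

/-- Summing, over the directed edges `p`, a weight times the difference of a vertex function between
the ends of `p` amounts to summing the vertex function against the divergence of the weight. -/
lemma sum_mul_sub_eq_sum_divergence_mul {ι R : Type*} [Fintype ι] [DecidableEq ι] [CommRing R]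
    (I : Finset (ι × ι)) (w : ι × ι → R) (f : ι → R) :
    ∑ p ∈ I, w p * (f p.1 - f p.2) =
      ∑ k, ((∑ p ∈ I.filter (fun p => p.1 = k), w p) -
        ∑ p ∈ I.filter (fun p => p.2 = k), w p) * f k := by
  have fiberwise (g : ι × ι → ι) :
      ∑ k, (∑ p ∈ I.filter (fun p => g p = k), w p) * f k = ∑ p ∈ I, w p * f (g p) := by
    rw [← Finset.sum_fiberwise I g]
    refine Finset.sum_congr rfl fun k _ => ?_
    rw [Finset.sum_mul]
    refine Finset.sum_congr rfl fun p hp => ?_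
    rw [(Finset.mem_filter.mp hp).2]
  simp only [sub_mul, mul_sub, Finset.sum_sub_distrib, fiberwise]

/-- (Branch invariance of `V₀`.)  Let `(z₁,…,zₙ)` be a solution of `H` for the
potential function `V = ∑_{(l,m)∈I} ε_{lm} Li₂(z_l/z_m)` (so each
`D_k := z_k ∂V/∂z_k` lies in `2πiℤ`).  For any integers `a_{lm}` and `b_k`, set
`Li₂*(z_l/z_m) := Li₂(z_l/z_m) + 2a_{lm}πi(log z_l − log z_m)`,
`log* z_k := log z_k + 2πi b_k`, and
`D_k* := D_k + 2πi(∑_{m:(k,m)∈I} ε_{km}a_{km} − ∑_{l:(l,k)∈I} ε_{lk}a_{lk})`.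
Then `∑ ε_{lm} Li₂*(z_l/z_m) − ∑_k D_k* log* z_k ≡ V(z) − ∑_k D_k log z_k
(mod 4π²)`: the value of `V₀` at a solution of `H` is invariant under a choice
of branch of the logarithm, modulo `4π²`. -/
theorem stmt3 (n : ℕ) (I : Finset (Fin n × Fin n)) (ε : Fin n × Fin n → ℤ)
    (hI : ∀ p ∈ I, p.1 ≠ p.2) (hε : ∀ p ∈ I, ε p = 1 ∨ ε p = -1)
    (z : Fin n → ℂ) (hz : ∀ k, z k ≠ 0)
    (hratio : ∀ p ∈ I, z p.1 / z p.2 ≠ 0 ∧ z p.1 / z p.2 ≠ 1)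
    (hsol : ∀ k : Fin n, Complex.exp (zdV n I ε z k) = 1)
    (a : Fin n × Fin n → ℤ) (b : Fin n → ℤ) :
    ∃ N : ℤ,
      ((∑ p ∈ I, (ε p : ℂ) *
          (Li2 (z p.1 / z p.2) +
            2 * (a p : ℂ) * (Real.pi : ℂ) * Complex.I *
              (Complex.log (z p.1) - Complex.log (z p.2)))) -
        ∑ k : Fin n,
          (zdV n I ε z k +
              2 * (Real.pi : ℂ) * Complex.I *
                ((∑ p ∈ I.filter (fun p => p.1 = k), (ε p : ℂ) * (a p : ℂ)) -
                  ∑ p ∈ I.filter (fun p => p.2 = k), (ε p : ℂ) * (a p : ℂ))) *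
            (Complex.log (z k) + 2 * (Real.pi : ℂ) * Complex.I * (b k : ℂ))) -
      ((∑ p ∈ I, (ε p : ℂ) * Li2 (z p.1 / z p.2)) -
        ∑ k : Fin n, zdV n I ε z k * Complex.log (z k)) =
      (N : ℂ) * (4 * (Real.pi : ℂ) ^ 2) := by
  choose d hd using fun k => Complex.exp_eq_one_iff.mp (hsol k)
  refine ⟨∑ k, (d k + ((∑ p ∈ I.filter (fun p => p.1 = k), ε p * a p) -
    ∑ p ∈ I.filter (fun p => p.2 = k), ε p * a p)) * b k, ?_⟩
  have hsum := sum_mul_sub_eq_sum_divergence_mul I (fun p => (ε p : ℂ) * (a p : ℂ))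
    (fun k => Complex.log (z k))
  have hLi : ∑ p ∈ I, (ε p : ℂ) *
        (Li2 (z p.1 / z p.2) + 2 * (a p : ℂ) * (Real.pi : ℂ) * Complex.I *
          (Complex.log (z p.1) - Complex.log (z p.2))) =
      ∑ p ∈ I, (ε p : ℂ) * Li2 (z p.1 / z p.2) + 2 * (Real.pi : ℂ) * Complex.I *
        ∑ p ∈ I, (ε p : ℂ) * (a p : ℂ) * (Complex.log (z p.1) - Complex.log (z p.2)) := by
    rw [Finset.mul_sum, ← Finset.sum_add_distrib]
    exact Finset.sum_congr rfl fun p _ => by ring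
  rw [hLi, hsum, add_sub_assoc, add_sub_sub_cancel, Finset.mul_sum, ← Finset.sum_sub_distrib,
    ← Finset.sum_add_distrib]
  push_cast
  rw [Finset.sum_mul]
  refine Finset.sum_congr rfl fun k _ => ?_
  rw [hd k]
  linear_combination (-4 * (Real.pi : ℂ) ^ 2 * b k * (d k +
    ((∑ p ∈ I.filter (fun p => p.1 = k), (ε p : ℂ) * (a p : ℂ)) -
      ∑ p ∈ I.filter (fun p => p.2 = k), (ε p : ℂ) * (a p : ℂ)))) * Complex.I_sq
end

section
/- (V₀ is constant on path components of the solution set.) Let V(z₁,…,zₙ) = ∑_{(l,m)∈I} ε_{lm} Li₂(z_l/z_m) be a potential function. Let α = (α₁,…,αₙ) : [0,1] → (ℂ∖{0})ⁿ be a differentiable path such that for all t ∈ [0,1] and all (l,m) ∈ I the ratio α_l(t)/α_m(t) lies in ℂ∖([1,∞) ∪ {0}), and suppose differentiable functions ℓ₁,…,ℓₙ : [0,1] → ℂ satisfy exp(ℓ_k(t)) = α_k(t) for all t (branches of log along the path). If there exist integers r₁,…,rₙ such that z_k ∂V/∂z_k evaluated at α(t) equals r_k π i for all t ∈ [0,1]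 and all k = 1,…,n, then the function t ↦ V(α(t)) − ∑_{k=1}^n r_k π i · ℓ_k(t) is constant on [0,1]. In particular, the value of V₀ is constant on each path component of the solution set of H. -/
open MeasureTheory Set Topology in
/-- The integrand defining `Li2` is interval integrable: the singularity at `0` is removable. -/
theorem intervalIntegrable_log_one_sub_mul_div (u : ℂ)
    (hu : ∀ s ∈ Icc (0 : ℝ) 1, 1 - u * s ∈ Complex.slitPlane) :
    IntervalIntegrable (fun s : ℝ => Complex.log (1 - u * s) / s) volume 0 1 := by
  have hcont : ContinuousOn
      (dslope (fun s : ℝ => Complex.log (1 - u * s)) 0) (Icc (0 : ℝ) 1) := by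
    have hd : ∀ s ∈ Icc (0 : ℝ) 1,
        DifferentiableAt ℝ (fun s : ℝ => Complex.log (1 - u * s)) s := by
      intro s hs
      have h : HasDerivAt (fun s : ℝ => 1 - u * (s : ℂ)) (-(u * 1)) s :=
        ((Complex.ofRealCLM.hasDerivAt (x := s)).const_mul u).const_sub 1
      exact (h.clog_real (hu s hs)).differentiableAt
    intro s hs
    by_cases h0 : s = 0
    · subst h0
      exact (continuousAt_dslope_same.2 (hd 0 hs)).continuousWithinAt
    · exact ((continuousAt_dslope_of_ne h0).2 (hd s hs).continuousAt).continuousWithinAt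
  have hint := hcont.intervalIntegrable_of_Icc (μ := volume) zero_le_one
  refine hint.congr fun s hs => ?_
  rw [uIoc_of_le zero_le_one] at hs
  rw [dslope_of_ne _ hs.1.ne', slope_def_module]
  simp [div_eq_inv_mul]

theorem one_sub_mul_mem_slitPlane {u : ℂ} (hu : 1 - u ∈ Complex.slitPlane) {s : ℝ}
    (hs : s ∈ Set.Icc (0 : ℝ) 1) : 1 - u * s ∈ Complex.slitPlane := by
  have h := Complex.starConvex_one_slitPlane hu (sub_nonneg.2 hs.2) hs.1 (by ring)
  convert h using 1
  simp only [Complex.real_smul]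
  push_cast
  ring

/-- `∫₀¹ -1/(1 - u s) ds = log (1 - u) / u`. -/
theorem integral_neg_inv_one_sub_mul {u : ℂ} (hu : 1 - u ∈ Complex.slitPlane) (h0 : u ≠ 0) :
    ∫ s in (0 : ℝ)..1, -(1 - u * s)⁻¹ = Complex.log (1 - u) / u := by
  have hmem : ∀ s ∈ Set.uIcc (0 : ℝ) 1, 1 - u * s ∈ Complex.slitPlane := fun s hs =>
    one_sub_mul_mem_slitPlane hu (by rwa [Set.uIcc_of_le zero_le_one] at hs)
  have hd : ∀ s ∈ Set.uIcc (0 : ℝ) 1,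
      HasDerivAt (fun s : ℝ => Complex.log (1 - u * s) / u) (-(1 - u * s)⁻¹) s := by
    intro s hs
    have h : HasDerivAt (fun s : ℝ => 1 - u * (s : ℂ)) (-(u * 1)) s :=
      ((Complex.ofRealCLM.hasDerivAt (x := s)).const_mul u).const_sub 1
    have hne := Complex.slitPlane_ne_zero (hmem s hs)
    refine ((h.clog_real (hmem s hs)).div_const u).congr_deriv ?_
    field_simp
  rw [intervalIntegral.integral_eq_sub_of_hasDerivAt hd]
  · simp
  · refine ContinuousOn.intervalIntegrable (ContinuousOn.neg (ContinuousOn.inv₀ ?_ ?_))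
    · fun_prop
    · exact fun s hs => Complex.slitPlane_ne_zero (hmem s hs)

open MeasureTheory Set Topology in
/-- `Li₂'(u) = -log (1 - u) / u` off the cut `[1, ∞)` and away from `0`. -/
theorem hasDerivAt_Li2 {u : ℂ} (hu : 1 - u ∈ Complex.slitPlane) (h0 : u ≠ 0) :
    HasDerivAt Li2 (-(Complex.log (1 - u) / u)) u := by
  have hopen : IsOpen {v : ℂ | 1 - v ∈ Complex.slitPlane} :=
    Complex.isOpen_slitPlane.preimage (by fun_prop)
  obtain ⟨δ, hδ, hball⟩ := Metric.nhds_basis_closedBall.mem_iff.1 (hopen.mem_nhds hu)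
  have hcont : ContinuousOn (fun q : ℂ × ℝ => -(1 - q.1 * q.2)⁻¹)
      (Metric.closedBall u δ ×ˢ Icc (0 : ℝ) 1) := by
    refine ContinuousOn.neg (ContinuousOn.inv₀ (by fun_prop) ?_)
    rintro ⟨v, s⟩ ⟨hv, hs⟩
    exact Complex.slitPlane_ne_zero (one_sub_mul_mem_slitPlane (hball hv) hs)
  obtain ⟨C, hC⟩ :=
    ((isCompact_closedBall u δ).prod isCompact_Icc).exists_bound_of_continuousOn hcont
  have key := (intervalIntegral.hasDerivAt_integral_of_dominated_loc_of_deriv_le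
    (μ := volume) (a := 0) (b := 1) (bound := fun _ => C)
    (F := fun (v : ℂ) (s : ℝ) => Complex.log (1 - v * s) / s)
    (F' := fun (v : ℂ) (s : ℝ) => -(1 - v * s)⁻¹) (x₀ := u)
    (Metric.closedBall_mem_nhds u hδ) ?_ ?_ ?_ ?_ ?_ ?_).2
  · rw [integral_neg_inv_one_sub_mul hu h0] at key
    exact key.fun_neg
  · refine Filter.Eventually.of_forall fun v => Measurable.aestronglyMeasurable ?_
    fun_prop
  · exact intervalIntegrable_log_one_sub_mul_div u fun s hs => one_sub_mul_mem_slitPlane hu hs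
  · refine Measurable.aestronglyMeasurable ?_
    fun_prop
  · refine Filter.Eventually.of_forall fun s hs v hv => hC (v, s) ⟨hv, ?_⟩
    rw [uIoc_of_le zero_le_one] at hs
    exact Ioc_subset_Icc_self hs
  · exact intervalIntegrable_const
  · refine Filter.Eventually.of_forall fun s hs v hv => ?_
    rw [uIoc_of_le zero_le_one] at hs
    have hmem := one_sub_mul_mem_slitPlane (hball hv) (Ioc_subset_Icc_self hs)
    have hne := Complex.slitPlane_ne_zero hmem
    have hs0 : (s : ℂ) ≠ 0 := by exact_mod_cast hs.1.ne'
    have h : HasDerivAt (fun v : ℂ => 1 - v * (s : ℂ)) (-(1 * (s : ℂ))) v :=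
      ((hasDerivAt_id v).mul_const (s : ℂ)).const_sub 1
    refine ((h.clog hmem).div_const (s : ℂ)).congr_deriv ?_
    field_simp

theorem one_sub_mem_slitPlane_of_forall_ne {u : ℂ} (hu : ∀ x : ℝ, 1 ≤ x → u ≠ x) :
    1 - u ∈ Complex.slitPlane := by
  by_contra h
  rw [Complex.mem_slitPlane_iff, not_or, not_lt, not_ne_iff] at h
  simp only [Complex.sub_re, Complex.one_re, Complex.sub_im, Complex.one_im] at h
  exact hu u.re (by linarith [h.1]) (Complex.ext (by simp) (by simpa using h.2))

/-- Pairing the logarithmic partial derivatives of the potential with a tangent vector. -/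
theorem sum_zdV_mul (n : ℕ) (I : Finset (Fin n × Fin n)) (ε : Fin n × Fin n → ℤ)
    (z w : Fin n → ℂ) :
    ∑ k, zdV n I ε z k * w k =
      ∑ p ∈ I, (ε p : ℂ) * (-Complex.log (1 - z p.1 / z p.2) * (w p.1 - w p.2)) := by
  simp only [zdV, Finset.sum_filter, ← Finset.sum_add_distrib, Finset.sum_mul]
  rw [Finset.sum_comm]
  refine Finset.sum_congr rfl fun p _ => ?_
  simp only [add_mul, ite_mul, zero_mul, Finset.sum_add_distrib, Finset.sum_ite_eq,
    Finset.mem_univ, if_true]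
  ring

/-- (`V₀` is constant on path components of the solution set.)  Let
`V = ∑_{(l,m)∈I} ε_{lm} Li₂(z_l/z_m)` be a potential function, let
`α : [0,1] → (ℂ∖{0})ⁿ` be a differentiable path along which every ratio
`α_l(t)/α_m(t)` with `(l,m) ∈ I` lies in `ℂ∖([1,∞) ∪ {0})`, and let
`ℓ₁,…,ℓₙ` be differentiable branches of the logarithm along the path
(`exp(ℓ_k(t)) = α_k(t)`).  If there are integers `r₁,…,rₙ` with
`z_k ∂V/∂z_k (α(t)) = r_k πi` for all `t ∈ [0,1]` and all `k`, then
`t ↦ V(α(t)) − ∑_k r_k πi ℓ_k(t)` is constant on `[0,1]`. -/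
theorem stmt4 (n : ℕ) (I : Finset (Fin n × Fin n)) (ε : Fin n × Fin n → ℤ)
    (hI : ∀ p ∈ I, p.1 ≠ p.2) (hε : ∀ p ∈ I, ε p = 1 ∨ ε p = -1)
    (α : ℝ → Fin n → ℂ) (ℓ : ℝ → Fin n → ℂ)
    (hα : ∀ k : Fin n, DifferentiableOn ℝ (fun t => α t k) (Set.Icc (0:ℝ) 1))
    (hℓ : ∀ k : Fin n, DifferentiableOn ℝ (fun t => ℓ t k) (Set.Icc (0:ℝ) 1))
    (hne : ∀ t ∈ Set.Icc (0:ℝ) 1, ∀ k : Fin n, α t k ≠ 0)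
    (hratio : ∀ t ∈ Set.Icc (0:ℝ) 1, ∀ p ∈ I,
      α t p.1 / α t p.2 ≠ 0 ∧ ∀ x : ℝ, 1 ≤ x → α t p.1 / α t p.2 ≠ (x : ℂ))
    (hexp : ∀ t ∈ Set.Icc (0:ℝ) 1, ∀ k : Fin n, Complex.exp (ℓ t k) = α t k)
    (r : Fin n → ℤ)
    (hr : ∀ t ∈ Set.Icc (0:ℝ) 1, ∀ k : Fin n,
      zdV n I ε (α t) k = (r k : ℂ) * (Real.pi : ℂ) * Complex.I) :
    ∀ t ∈ Set.Icc (0:ℝ) 1, ∀ s ∈ Set.Icc (0:ℝ) 1,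
      (∑ p ∈ I, (ε p : ℂ) * Li2 (α t p.1 / α t p.2)) -
          (∑ k : Fin n, (r k : ℂ) * (Real.pi : ℂ) * Complex.I * ℓ t k) =
        (∑ p ∈ I, (ε p : ℂ) * Li2 (α s p.1 / α s p.2)) -
          ∑ k : Fin n, (r k : ℂ) * (Real.pi : ℂ) * Complex.I * ℓ s k := by
  set S := Set.Icc (0 : ℝ) 1
  have hderiv : ∀ t ∈ S, HasDerivWithinAt
      (fun t => (∑ p ∈ I, (ε p : ℂ) * Li2 (α t p.1 / α t p.2)) -
        ∑ k : Fin n, (r k : ℂ) * (Real.pi : ℂ) * Complex.I * ℓ t k) 0 S t := by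
    intro t ht
    have hℓ' : ∀ k, HasDerivWithinAt (fun t => ℓ t k)
        (derivWithin (fun t => ℓ t k) S t) S t := fun k => (hℓ k t ht).hasDerivWithinAt
    have hquot : ∀ p : Fin n × Fin n, ∀ t ∈ S,
        α t p.1 / α t p.2 = Complex.exp (ℓ t p.1 - ℓ t p.2) := fun p t ht => by
      rw [Complex.exp_sub, hexp t ht, hexp t ht]
    have hLi : ∀ p ∈ I, HasDerivWithinAt (fun t => (ε p : ℂ) * Li2 (α t p.1 / α t p.2))
        ((ε p : ℂ) * (-Complex.log (1 - α t p.1 / α t p.2) *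
          (derivWithin (fun t => ℓ t p.1) S t - derivWithin (fun t => ℓ t p.2) S t))) S t := by
      intro p hp
      obtain ⟨hu0, hux⟩ := hratio t ht p hp
      have hq := (((hℓ' p.1).sub (hℓ' p.2)).cexp).congr_of_mem (hquot p) ht
      have hL := hasDerivAt_Li2 (one_sub_mem_slitPlane_of_forall_ne hux) hu0
      refine ((hL.comp_hasDerivWithinAt t hq).const_mul (ε p : ℂ)).congr_deriv ?_
      simp only [Pi.sub_apply]
      rw [← hquot p t ht]
      have h₁ := hne t ht p.1
      have h₂ := hne t ht p.2
      field_simp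
    refine ((HasDerivWithinAt.fun_sum hLi).sub (HasDerivWithinAt.fun_sum fun k _ =>
      (hℓ' k).const_mul ((r k : ℂ) * (Real.pi : ℂ) * Complex.I))).congr_deriv ?_
    rw [← sum_zdV_mul n I ε (α t) fun k => derivWithin (fun t => ℓ t k) S t, sub_eq_zero]
    exact Finset.sum_congr rfl fun k _ => by rw [hr t ht k]
  have hconst := constant_of_derivWithin_zero
    (fun t ht => (hderiv t ht).differentiableWithinAt) fun t ht =>
      (hderiv t (Set.Ico_subset_Icc_self ht)).derivWithin
        (uniqueDiffOn_Icc zero_lt_one t (Set.Ico_subset_Icc_self ht))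
  exact fun t ht s hs => (hconst t ht).trans (hconst s hs).symm
end

section
/- (Scale invariance of V₀.) Let V(z₁,…,zₙ) = ∑_{(l,m)∈I} ε_{lm} Li₂(z_l/z_m) be a potential function and let z = (z₁,…,zₙ) be a solution of H, so that for each k the value z_k ∂V/∂z_k equals r_k π i for some even integer r_k. Then for every nonzero λ ∈ ℂ, the point λz = (λz₁,…,λzₙ) is also a solution of H with the same values r_k πi, and V₀(λz) ≡ V₀(z) (mod 4π²). -/
/-- The modified potential function
`V₀(z) = V(z) − ∑_k (z_k ∂V/∂z_k)·log z_k` with `V = ∑_{(l,m)∈I} ε_{lm} Li₂(z_l/z_m)`. -/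
noncomputable def V0 (n : ℕ) (I : Finset (Fin n × Fin n)) (ε : Fin n × Fin n → ℤ)
    (z : Fin n → ℂ) : ℂ :=
  (∑ p ∈ I, (ε p : ℂ) * Li2 (z p.1 / z p.2)) -
    ∑ k : Fin n, zdV n I ε z k * Complex.log (z k)

/-- `z_k ∂V/∂z_k` depends only on the ratios of the coordinates. -/
lemma zdV_smul (n : ℕ) (I : Finset (Fin n × Fin n)) (ε : Fin n × Fin n → ℤ)
    (z : Fin n → ℂ) {c : ℂ} (hc : c ≠ 0) (k : Fin n) :
    zdV n I ε (fun i => c * z i) k = zdV n I ε z k := by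
  simp only [zdV, mul_div_mul_left _ _ hc]

/-- Euler's relation for the degree-zero homogeneous function `V`. -/
lemma sum_zdV (n : ℕ) (I : Finset (Fin n × Fin n)) (ε : Fin n × Fin n → ℤ) (z : Fin n → ℂ) :
    ∑ k, zdV n I ε z k = 0 := by
  simp only [zdV, Finset.sum_add_distrib]
  rw [Finset.sum_fiberwise, Finset.sum_fiberwise, ← Finset.sum_add_distrib]
  exact Finset.sum_eq_zero fun p _ => by ring

/-- The principal logarithm is additive modulo `2πi`. -/
lemma exists_log_mul_eq {a b : ℂ} (ha : a ≠ 0) (hb : b ≠ 0) :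
    ∃ m : ℤ, Complex.log (a * b) =
      Complex.log a + Complex.log b + m * (2 * Real.pi * Complex.I) := by
  rw [← Complex.exp_eq_exp_iff_exists_int, Complex.exp_add, Complex.exp_log ha,
    Complex.exp_log hb, Complex.exp_log (mul_ne_zero ha hb)]

/-- (Scale invariance of `V₀`.)  Let `z = (z₁,…,zₙ)` be a solution of `H` for
the potential function `V = ∑_{(l,m)∈I} ε_{lm} Li₂(z_l/z_m)`, so that each
`z_k ∂V/∂z_k` equals `r_k πi` for some even integer `r_k`.  Then for every
nonzero `λ ∈ ℂ` the point `λz` is also a solution of `H` with the same values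
`r_k πi`, and `V₀(λz) ≡ V₀(z) (mod 4π²)`. -/
theorem stmt5 (n : ℕ) (I : Finset (Fin n × Fin n)) (ε : Fin n × Fin n → ℤ)
    (hI : ∀ p ∈ I, p.1 ≠ p.2) (hε : ∀ p ∈ I, ε p = 1 ∨ ε p = -1)
    (z : Fin n → ℂ) (hz : ∀ k, z k ≠ 0)
    (hratio : ∀ p ∈ I, z p.1 / z p.2 ≠ 0 ∧ z p.1 / z p.2 ≠ 1)
    (hsol : ∀ k : Fin n, Complex.exp (zdV n I ε z k) = 1)
    (r : Fin n → ℤ) (hreven : ∀ k, Even (r k))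
    (hr : ∀ k : Fin n, zdV n I ε z k = (r k : ℂ) * (Real.pi : ℂ) * Complex.I) :
    ∀ lam : ℂ, lam ≠ 0 →
      (∀ p ∈ I, (lam * z p.1) / (lam * z p.2) ≠ 0 ∧ (lam * z p.1) / (lam * z p.2) ≠ 1) ∧
      (∀ k : Fin n, Complex.exp (zdV n I ε (fun i => lam * z i) k) = 1) ∧
      (∀ k : Fin n,
        zdV n I ε (fun i => lam * z i) k = (r k : ℂ) * (Real.pi : ℂ) * Complex.I) ∧
      ∃ N : ℤ, V0 n I ε (fun i => lam * z i) - V0 n I ε z =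
        (N : ℂ) * (4 * (Real.pi : ℂ) ^ 2) := by
  intro lam hlam
  have hzdV := fun k => zdV_smul n I ε z hlam k
  refine ⟨fun p hp => ?_, fun k => ?_, fun k => ?_, ?_⟩
  · rw [mul_div_mul_left _ _ hlam]
    exact hratio p hp
  · rw [hzdV, hsol]
  · rw [hzdV, hr]
  choose m hm using fun k => exists_log_mul_eq hlam (hz k)
  choose s hs using hreven
  refine ⟨∑ k, s k * m k, ?_⟩
  have hsum : ∑ k, zdV n I ε z k * Complex.log (lam * z k) =
      ∑ k, zdV n I ε z k * Complex.log (z k) -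
        (∑ k, (s k : ℂ) * m k) * (4 * (Real.pi : ℂ) ^ 2) := by
    calc ∑ k, zdV n I ε z k * Complex.log (lam * z k)
        = ∑ k, (zdV n I ε z k * Complex.log lam + (zdV n I ε z k * Complex.log (z k) -
            (s k : ℂ) * m k * (4 * (Real.pi : ℂ) ^ 2))) := by
          refine Finset.sum_congr rfl fun k _ => ?_
          rw [hm, hr, hs]
          push_cast
          linear_combination 4 * (s k : ℂ) * m k * (Real.pi : ℂ) ^ 2 * Complex.I_sq
      _ = _ := by
          rw [Finset.sum_add_distrib, ← Finset.sum_mul, sum_zdV, Finset.sum_sub_distrib,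
            ← Finset.sum_mul, zero_mul, zero_add]
  simp only [V0, hzdV, mul_div_mul_left _ _ hlam, hsum]
  push_cast
  ring
end
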